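/- arXiv:1411.7467 — 2 statements merged into one kernel-verified Lean document; each statement's English description precedes it below -/
import Mathlib

section
/- Let γ ≥ 1/2 be a half-integer and j ∈ {−1/2, 0, 1/2, 1, …} with j > γ − 1. Then for every M ∈ {j+1−γ, j+2−γ, …}, the restriction Q_M of the Casimir 𝒬 of F_γ ⊗ D⁺_j to the finite-dimensional subspace V_M is diagonalizable, and its eigenvalues are exactly the pairwise distinct values q_(μ) = −(j+μ)(j+μ+1) for μ ∈ {−γ, …, min(γ, M−j−1)}; in particular the eigenvalues do not depend on M. -/
/-!
Statement 0: lowest weight vectors ψ_(μ) in the coupling F_γ ⊗ D⁺_j for sl(2,ℝ).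

Conventions: γ = G/2 with `G : ℕ`, `1 ≤ G`; j = (K-1)/2 with `K : ℕ` (so j ∈ {-1/2,0,1/2,...}).
The space F_γ ⊗ D⁺_j has basis indexed by `(ν, k) : Fin (G+1) × ℕ`, the basis vector
`single (ν,k) 1` representing |γ, ν-γ⟩ ⊗ |j, j+1+k⟩.
-/

noncomputable section

/-- Principal branch of the complex square root. -/
def csqrt (z : ℂ) : ℂ := z ^ ((1 : ℂ) / 2)

/-- C₊(j,m) = i √(j-m) √(j+m+1). -/
def Cp (j m : ℂ) : ℂ := Complex.I * csqrt (j - m) * csqrt (j + m + 1)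

/-- C₋(j,m) = i √(j+m) √(j-m+1). -/
def Cm (j m : ℂ) : ℂ := Complex.I * csqrt (j + m) * csqrt (j - m + 1)

/-- γ = G/2, as a complex number. -/
def gam (G : ℕ) : ℂ := (G : ℂ) / 2

/-- j = (K-1)/2, as a complex number. -/
def jd (K : ℕ) : ℂ := ((K : ℂ) - 1) / 2

/-- μ = ν - γ for ν : Fin (G+1). -/
def muc (G : ℕ) (ν : Fin (G + 1)) : ℂ := ((ν : ℕ) : ℂ) - gam G

/-- m = j + 1 + k for k : ℕ. -/
def md (K : ℕ) (k : ℕ) : ℂ := jd K + 1 + (k : ℂ)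

/-- The vector space F_γ ⊗ D⁺_j. -/
abbrev W (G : ℕ) := (Fin (G + 1) × ℕ) →₀ ℂ

/-- Basis vector with coefficient, with out-of-range indices giving 0. -/
def eV (G : ℕ) (i k : ℤ) (c : ℂ) : W G :=
  if h : 0 ≤ i ∧ i < (G : ℤ) + 1 ∧ 0 ≤ k then
    Finsupp.single ((⟨i.toNat, by omega⟩ : Fin (G + 1)), k.toNat) c
  else 0

/-- 𝒥₀ = J₀ ⊗ 1 + 1 ⊗ J₀. -/
def J0 (G K : ℕ) : W G →ₗ[ℂ] W G :=
  Finsupp.lsum ℂ fun p => LinearMap.toSpanSingleton ℂ (W G)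
    (Finsupp.single p (muc G p.1 + md K p.2))

/-- 𝒥₊ = J₊ ⊗ 1 + 1 ⊗ J₊. -/
def Jp (G K : ℕ) : W G →ₗ[ℂ] W G :=
  Finsupp.lsum ℂ fun p => LinearMap.toSpanSingleton ℂ (W G)
    (eV G ((p.1 : ℕ) + 1) (p.2 : ℕ) (Cp (gam G) (muc G p.1)) +
      eV G (p.1 : ℕ) ((p.2 : ℕ) + 1) (Cp (jd K) (md K p.2)))

/-- 𝒥₋ = J₋ ⊗ 1 + 1 ⊗ J₋. -/
def Jm (G K : ℕ) : W G →ₗ[ℂ] W G :=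
  Finsupp.lsum ℂ fun p => LinearMap.toSpanSingleton ℂ (W G)
    (eV G ((p.1 : ℕ) - 1) (p.2 : ℕ) (Cm (gam G) (muc G p.1)) +
      eV G (p.1 : ℕ) ((p.2 : ℕ) - 1) (Cm (jd K) (md K p.2)))

/-- The Casimir 𝒬 = -𝒥₀(𝒥₀+1) + 𝒥₋𝒥₊. -/
def Qcas (G K : ℕ) : W G →ₗ[ℂ] W G :=
  -(J0 G K ∘ₗ (J0 G K + LinearMap.id)) + Jm G K ∘ₗ Jp G K

/-- The lowest weight vector ψ_(μ), μ = t - γ: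
ψ_(μ) = Σ_{ν=-γ}^{μ} (-1)^{γ+ν} (Π_{σ=-γ}^{ν-1} C₊(j, j+μ-σ)/C₊(γ,σ)) |γ,ν⟩ ⊗ |j, j+1+μ-ν⟩. -/
def psiLW (G K : ℕ) (t : Fin (G + 1)) : W G :=
  ∑ s ∈ Finset.range (t.1 + 1),
    eV G (s : ℤ) ((t.1 : ℤ) - (s : ℤ))
      ((-1 : ℂ) ^ s *
        ∏ r ∈ Finset.range s,
          Cp (jd K) (jd K + ((t.1 : ℕ) : ℂ) - (r : ℂ)) / Cp (gam G) ((r : ℂ) - gam G))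

/-- q_(μ) = -(j+μ)(j+μ+1). -/
def qe (G K : ℕ) (t : Fin (G + 1)) : ℂ :=
  -((jd K + muc G t) * (jd K + muc G t + 1))

/-- The 𝒥₀-eigenvalue-M subspace V_M of F_γ ⊗ D⁺_j, for M = j+1-γ+M', M' : ℕ:
it is spanned by the basis vectors |γ,ν-γ⟩⊗|j,j+1+k⟩ with ν + k = M'. -/
def VM (G : ℕ) (M' : ℕ) : Submodule ℂ (W G) :=
  Submodule.span ℂ
    {w : W G | ∃ p : Fin (G + 1) × ℕ, (p.1 : ℕ) + p.2 = M' ∧ w = Finsupp.single p 1}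

/-- A linear operator is diagonalizable on an invariant subspace `p` iff `p` is spanned by
eigenvectors of the operator lying in `p`. -/
def DiagOn {V : Type*} [AddCommGroup V] [Module ℂ V]
    (f : V →ₗ[ℂ] V) (p : Submodule ℂ V) : Prop :=
  Submodule.span ℂ {w : V | w ∈ p ∧ ∃ c : ℂ, f w = c • w} = p

/-!
The operators `-2𝒥₀, 𝒥₋, -𝒥₊` form an `sl₂` triple for which each `ψ_(μ)` is a primitive vector, of
weight `-2(j+μ+1)`. Its descendants `(-𝒥₊)ⁿψ_(μ)` are therefore eigenvectors of the Casimir with the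
same eigenvalue `q_(μ)` for every `n`, and they vanish only if the weight is a natural number less
than `n`. For `j > γ - 1` the weights are negative and the `q_(μ)` pairwise distinct, so `V_M`
contains one eigenvector for each `μ ≤ min(γ, M-j-1)`, and these are linearly independent. As `V_M`
is spanned by equally many vectors, they form a basis of it.
-/

open Module

section Eigenvectors

theorem span_range_eq_of_hasEigenvector {F V ι : Type*} [Field F] [AddCommGroup V] [Module F V]
    [Fintype ι] {f : End F V} {p : Submodule F V} [FiniteDimensional F p] {v : ι → V} {μ : ι → F}
    (hμ : Function.Injective μ) (hv : ∀ i, f.HasEigenvector (μ i) (v i)) (hvp : ∀ i, v i ∈ p)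
    (hp : finrank F p ≤ Fintype.card ι) : Submodule.span F (Set.range v) = p := by
  refine Submodule.eq_of_le_of_finrank_le (Submodule.span_le.2 (Set.range_subset_iff.2 hvp)) ?_
  rwa [finrank_span_eq_card (f.eigenvectors_linearIndependent' μ hμ v hv)]

theorem exists_mem_span_range_eigenvector_iff {R V ι : Type*} [CommRing R] [IsDomain R]
    [AddCommGroup V] [Module R V] [IsTorsionFree R V] {f : End R V} {v : ι → V} {μ : ι → R}
    (hv : ∀ i, f.HasEigenvector (μ i) (v i)) (c : R) :
    (∃ w ∈ Submodule.span R (Set.range v), w ≠ 0 ∧ f w = c • w) ↔ ∃ i, c = μ i := by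
  constructor
  · rintro ⟨w, hw, hw0, hwc⟩
    by_contra! hc
    have hle : Submodule.span R (Set.range v) ≤ ⨆ d ≠ c, f.eigenspace d :=
      Submodule.span_le.2 <| Set.range_subset_iff.2 fun i =>
        Submodule.mem_iSup_of_mem (μ i) <| Submodule.mem_iSup_of_mem (hc i).symm (hv i).1
    exact hw0 <| Submodule.disjoint_def.1 (f.eigenspaces_iSupIndep c) w
      (End.mem_eigenspace_iff.2 hwc) (hle hw)
  · rintro ⟨i, rfl⟩
    exact ⟨v i, Submodule.subset_span ⟨i, rfl⟩, (hv i).2, (hv i).apply_eq_smul⟩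

theorem diagOn_span_range {V ι : Type*} [AddCommGroup V] [Module ℂ V] {f : V →ₗ[ℂ] V} {v : ι → V}
    {μ : ι → ℂ} (hv : ∀ i, f (v i) = μ i • v i) : DiagOn f (Submodule.span ℂ (Set.range v)) := by
  refine le_antisymm (Submodule.span_le.2 fun w hw => hw.1) (Submodule.span_mono ?_)
  rintro _ ⟨i, rfl⟩
  exact ⟨Submodule.subset_span ⟨i, rfl⟩, μ i, hv i⟩

end Eigenvectors

section Sl2Triples

open LieModule

theorem isSl2Triple_neg_two_nsmul {L : Type*} [LieRing L] {h e f : L} (h0 : 2 • h ≠ 0)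
    (he : ⁅h, e⁆ = -e) (hf : ⁅h, f⁆ = f) (hef : ⁅e, f⁆ = 2 • h) :
    IsSl2Triple (-(2 • h)) e (-f) where
  h_ne_zero := neg_ne_zero.2 h0
  lie_e_f := by rw [lie_neg, hef]
  lie_h_e_nsmul := by rw [neg_lie, nsmul_lie, he, smul_neg, neg_neg]
  lie_h_f_nsmul := by rw [neg_lie, lie_neg, nsmul_lie, hf, smul_neg]

variable {R L V : Type*} [CommRing R] [LieRing L] [LieAlgebra R L] [AddCommGroup V] [Module R V]
  [LieRingModule L V] [LieModule R L V] {h e f : L} {t : IsSl2Triple h e f} {v : V} {μ : R}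

theorem casimir_pow_toEnd_f (P : t.HasPrimitiveVectorWith v μ) (n : ℕ) :
    letI ψ := (toEnd R L V f ^ n) v
    ⁅h, ⁅h, ψ⁆⁆ - (2 : R) • ⁅h, ψ⁆ + (4 : R) • ⁅e, ⁅f, ψ⁆⁆ = (μ * (μ + 2)) • ψ := by
  rw [P.lie_f_pow_toEnd_f, P.lie_e_pow_succ_toEnd_f, P.lie_h_pow_toEnd_f, lie_smul,
    P.lie_h_pow_toEnd_f]
  module

theorem pow_toEnd_f_ne_zero_of_forall_ne [IsDomain R] [CharZero R] [IsTorsionFree R V]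
    (P : t.HasPrimitiveVectorWith v μ) {n : ℕ} (hμ : ∀ i < n, μ ≠ i) :
    (toEnd R L V f ^ n) v ≠ 0 := by
  induction n with
  | zero => exact P.ne_zero
  | succ n ih =>
    intro h0
    have hn : ((n + 1) * (μ - n)) • (toEnd R L V f ^ n) v = 0 := by
      rw [← P.lie_e_pow_succ_toEnd_f, h0, lie_zero]
    refine (smul_ne_zero (mul_ne_zero n.cast_add_one_ne_zero ?_) ?_) hn
    · exact sub_ne_zero.2 (hμ n n.lt_succ_self)
    · exact ih fun i hi => hμ i (hi.trans n.lt_succ_self)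

end Sl2Triples

section Coefficients

theorem csqrt_sq (z : ℂ) : csqrt z ^ 2 = z := by
  rw [csqrt, one_div, ← Nat.cast_ofNat, Complex.cpow_nat_inv_pow z two_ne_zero]

theorem Cp_sq (j m : ℂ) : Cp j m ^ 2 = -((j - m) * (j + m + 1)) := by
  rw [Cp, mul_pow, mul_pow, csqrt_sq, csqrt_sq, Complex.I_sq]
  ring

theorem Cp_eq_zero_iff {j m : ℂ} : Cp j m = 0 ↔ j - m = 0 ∨ j + m + 1 = 0 := by
  rw [← sq_eq_zero_iff, Cp_sq, neg_eq_zero, mul_eq_zero]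

theorem Cm_eq_Cp_sub_one (j m : ℂ) : Cm j m = Cp j (m - 1) := by
  rw [Cm, Cp, mul_right_comm]
  ring_nf

end Coefficients

section BasisVectors

variable {G : ℕ} {i k : ℤ}

theorem eV_natCast (ν : Fin (G + 1)) (n : ℕ) (c : ℂ) :
    eV G ((ν : ℕ) : ℤ) n c = Finsupp.single (ν, n) c := by
  rw [eV, dif_pos (by omega)]
  simp only [Int.toNat_natCast, Fin.eta]

theorem eV_eq_zero (h : ¬(0 ≤ i ∧ i < (G : ℤ) + 1 ∧ 0 ≤ k)) (c : ℂ) : eV G i k c = 0 :=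
  dif_neg h

theorem exists_natCast_of_inRange (h : 0 ≤ i ∧ i < (G : ℤ) + 1 ∧ 0 ≤ k) :
    ∃ (ν : Fin (G + 1)) (n : ℕ), i = ((ν : ℕ) : ℤ) ∧ k = n :=
  ⟨⟨i.toNat, by omega⟩, k.toNat, (Int.toNat_of_nonneg h.1).symm,
    (Int.toNat_of_nonneg h.2.2).symm⟩

theorem eV_eq_smul (i k : ℤ) (c : ℂ) : eV G i k c = c • eV G i k 1 := by
  unfold eV
  split_ifs
  · rw [Finsupp.smul_single_one]
  · rw [smul_zero]

theorem eV_apply (i k : ℤ) (c : ℂ) (p : Fin (G + 1) × ℕ) :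
    eV G i k c p = if i = (p.1 : ℕ) ∧ k = p.2 then c else 0 := by
  by_cases h : 0 ≤ i ∧ i < (G : ℤ) + 1 ∧ 0 ≤ k
  · obtain ⟨ν, n, rfl, rfl⟩ := exists_natCast_of_inRange h
    simp only [eV_natCast, Finsupp.single_apply, Prod.ext_iff, Fin.ext_iff, Nat.cast_inj]
  · rw [eV_eq_zero h, if_neg (by omega), Finsupp.zero_apply]

theorem hom_ext_eV {f g : End ℂ (W G)} (h : ∀ i k : ℤ, f (eV G i k 1) = g (eV G i k 1)) :
    f = g := by
  refine Finsupp.lhom_ext' fun p => LinearMap.ext_ring ?_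
  simpa [eV_natCast] using h (p.1 : ℕ) p.2

end BasisVectors

section Operators

variable (G K : ℕ)

theorem J0_apply (w : W G) (p : Fin (G + 1) × ℕ) :
    J0 G K w p = (muc G p.1 + md K p.2) * w p := by
  by_cases hp : w p = 0 <;> simp [J0, Finsupp.sum_apply, Finsupp.single_apply, hp, add_mul,
    mul_comm]

theorem J0_eV (i k : ℤ) :
    J0 G K (eV G i k 1) = ((i : ℂ) - gam G + (jd K + 1 + k)) • eV G i k 1 := by
  ext p
  rw [J0_apply, Finsupp.smul_apply, smul_eq_mul, eV_apply]
  split_ifs with h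
  · simp only [h.1, h.2, muc, md, Int.cast_natCast]
  · rw [mul_zero, mul_zero]

/-- The formula extends to out-of-range labels, since the coefficients leading from them back into
the range vanish. -/
theorem Jp_eV (i k : ℤ) :
    Jp G K (eV G i k 1) = Cp (gam G) (i - gam G) • eV G (i + 1) k 1
      + Cp (jd K) (jd K + 1 + k) • eV G i (k + 1) 1 := by
  by_cases h : 0 ≤ i ∧ i < (G : ℤ) + 1 ∧ 0 ≤ k
  · obtain ⟨ν, n, rfl, rfl⟩ := exists_natCast_of_inRange h
    rw [← eV_eq_smul, ← eV_eq_smul, eV_natCast]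
    simp [Jp, muc, md]
  · have hγ : Cp (gam G) (i - gam G) • eV G (i + 1) k 1 = 0 := by
      rcases eq_or_ne i (-1) with rfl | hi
      · rw [Cp_eq_zero_iff.2 (.inr (by push_cast; ring)), zero_smul]
      · rw [eV_eq_zero (by omega), smul_zero]
    have hj : Cp (jd K) (jd K + 1 + k) • eV G i (k + 1) 1 = 0 := by
      rcases eq_or_ne k (-1) with rfl | hk
      · rw [Cp_eq_zero_iff.2 (.inl (by push_cast; ring)), zero_smul]
      · rw [eV_eq_zero (by omega), smul_zero]
    rw [eV_eq_zero h, map_zero, hγ, hj, add_zero]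

theorem Jm_eV (i k : ℤ) :
    Jm G K (eV G i k 1) = Cp (gam G) (i - 1 - gam G) • eV G (i - 1) k 1
      + Cp (jd K) (jd K + k) • eV G i (k - 1) 1 := by
  by_cases h : 0 ≤ i ∧ i < (G : ℤ) + 1 ∧ 0 ≤ k
  · obtain ⟨ν, n, rfl, rfl⟩ := exists_natCast_of_inRange h
    have hγ : Cm (gam G) (muc G ν) = Cp (gam G) ((((ν : ℕ) : ℤ) : ℂ) - 1 - gam G) := by
      rw [Cm_eq_Cp_sub_one, muc, Int.cast_natCast, sub_right_comm]
    have hj : Cm (jd K) (md K n) = Cp (jd K) (jd K + ((n : ℤ) : ℂ)) := by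
      rw [Cm_eq_Cp_sub_one, md, Int.cast_natCast, add_right_comm, add_sub_cancel_right]
    rw [← eV_eq_smul, ← eV_eq_smul, eV_natCast, ← hγ, ← hj]
    simp [Jm]
  · have hγ : Cp (gam G) (i - 1 - gam G) • eV G (i - 1) k 1 = 0 := by
      rcases eq_or_ne i (G + 1) with rfl | hi
      · rw [Cp_eq_zero_iff.2 (.inl (by push_cast [gam]; ring)), zero_smul]
      · rw [eV_eq_zero (by omega), smul_zero]
    have hj : Cp (jd K) (jd K + k) • eV G i (k - 1) 1 = 0 := by
      rcases eq_or_ne k 0 with rfl | hk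
      · rw [Cp_eq_zero_iff.2 (.inl (by push_cast; ring)), zero_smul]
      · rw [eV_eq_zero (by omega), smul_zero]
    rw [eV_eq_zero h, map_zero, hγ, hj, add_zero]

theorem J0_ne_zero : J0 G K ≠ 0 := by
  intro h
  have hw (n : ℕ) : muc G 0 + md K n = 0 := by
    simpa [h] using (J0_apply G K (Finsupp.single (0, n) 1) (0, n)).symm
  have h01 := (hw 0).trans (hw 1).symm
  simp [md] at h01

theorem lie_J0_Jp : ⁅J0 G K, Jp G K⁆ = Jp G K := by
  refine hom_ext_eV fun i k => ?_
  simp only [Ring.lie_def, LinearMap.sub_apply, End.mul_apply, J0_eV, Jp_eV, map_add, map_smul]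
  push_cast
  module

theorem lie_J0_Jm : ⁅J0 G K, Jm G K⁆ = -Jm G K := by
  refine hom_ext_eV fun i k => ?_
  simp only [Ring.lie_def, LinearMap.sub_apply, LinearMap.neg_apply, End.mul_apply, J0_eV, Jm_eV,
    map_add, map_smul]
  push_cast
  module

theorem lie_Jm_Jp : ⁅Jm G K, Jp G K⁆ = 2 • J0 G K := by
  refine hom_ext_eV fun i k => ?_
  have hj₁ : jd K + ((k : ℂ) + 1) = jd K + 1 + k := by ring
  have hj₂ : jd K + 1 + ((k : ℂ) - 1) = jd K + k := by ring
  simp only [Ring.lie_def, LinearMap.sub_apply, LinearMap.smul_apply, End.mul_apply, J0_eV, Jp_eV,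
    Jm_eV, map_add, map_smul, Int.cast_add, Int.cast_sub, Int.cast_one, add_sub_cancel_right,
    sub_add_cancel, hj₁, hj₂]
  linear_combination (norm := module)
    (Cp_sq (gam G) (i - gam G) - Cp_sq (gam G) (i - 1 - gam G)
      + Cp_sq (jd K) (jd K + 1 + k) - Cp_sq (jd K) (jd K + k)) • eV G i k (1 : ℂ)

theorem neg_four_smul_Qcas (w : W G) :
    (-4 : ℂ) • Qcas G K w = ⁅-(2 • J0 G K), ⁅-(2 • J0 G K), w⁆⁆
      - (2 : ℂ) • ⁅-(2 • J0 G K), w⁆ + (4 : ℂ) • ⁅Jm G K, ⁅-Jp G K, w⁆⁆ := by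
  simp only [Qcas, End.lie_apply, LinearMap.add_apply, LinearMap.neg_apply, LinearMap.smul_apply,
    LinearMap.comp_apply, LinearMap.id_apply, map_add, map_neg, map_nsmul]
  module

end Operators

section WeightSpaces

variable {G K M : ℕ}

theorem eV_mem_VM {i k : ℤ} (h : i + k = M) (c : ℂ) : eV G i k c ∈ VM G M := by
  by_cases hr : 0 ≤ i ∧ i < (G : ℤ) + 1 ∧ 0 ≤ k
  · obtain ⟨ν, n, rfl, rfl⟩ := exists_natCast_of_inRange hr
    rw [eV_eq_smul, eV_natCast]
    exact Submodule.smul_mem _ _ (Submodule.subset_span ⟨(ν, n), by exact_mod_cast h, rfl⟩)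
  · rw [eV_eq_zero hr]
    exact Submodule.zero_mem _

theorem VM_eq_supported (G M : ℕ) :
    VM G M = Finsupp.supported ℂ ℂ {p : Fin (G + 1) × ℕ | (p.1 : ℕ) + p.2 = M} := by
  rw [Finsupp.supported_eq_span_single, VM]
  simp only [Set.image, Set.mem_ofPred_eq, eq_comm]

/-- The index set of the `q_(μ)` occurring in `V_M`, with `μ ∈ {-γ, …, min(γ, M-j-1)}` encoded as
`t = μ + γ`. -/
abbrev MuIndex (G M : ℕ) := {t : Fin (G + 1) // (t : ℕ) ≤ M}

theorem VM_eq_span_range (G M : ℕ) :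
    VM G M = Submodule.span ℂ (Set.range fun t : MuIndex G M =>
      Finsupp.single (t.1, M - t.1) (1 : ℂ)) := by
  refine congrArg _ (Set.ext fun w => ⟨?_, ?_⟩)
  · rintro ⟨⟨ν, n⟩, rfl, rfl⟩
    exact ⟨⟨ν, ν.1.le_add_right n⟩, by simp only [Nat.add_sub_cancel_left]⟩
  · rintro ⟨t, rfl⟩
    exact ⟨_, Nat.add_sub_cancel' t.2, rfl⟩

instance finiteDimensional_VM (G M : ℕ) : FiniteDimensional ℂ (VM G M) := by
  rw [VM_eq_span_range]
  exact FiniteDimensional.span_of_finite ℂ (Set.finite_range _)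

theorem finrank_VM_le (G M : ℕ) :
    finrank ℂ (VM G M) ≤ Fintype.card (MuIndex G M) := by
  rw [VM_eq_span_range]
  exact finrank_range_le_card _

theorem mem_VM_iff {w : W G} :
    w ∈ VM G M ↔ J0 G K w = (jd K + 1 - gam G + M) • w := by
  rw [VM_eq_supported, Finsupp.mem_supported', Finsupp.ext_iff]
  refine forall_congr' fun p => ?_
  have hweight : muc G p.1 + md K p.2 = jd K + 1 - gam G + M ↔ (p.1 : ℕ) + p.2 = M := by
    rw [← Nat.cast_inj (R := ℂ), muc, md]
    push_cast
    constructor <;> intro h <;> linear_combination h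
  rw [J0_apply, Finsupp.smul_apply, smul_eq_mul, mul_eq_mul_right_iff, hweight, Set.mem_ofPred_eq,
    or_iff_not_imp_left]

end WeightSpaces

section LowestWeightVectors

-- Not activated earlier: on `W G →ₗ[ℂ] W G` its bracket competes with the Lie action of
-- `End ℂ (W G)` on linear maps, which is not reducibly equal to it.
attribute [local instance] LieRing.ofAssociativeRing

theorem isSl2Triple_J (G K : ℕ) :
    IsSl2Triple (L := End ℂ (W G)) (-(2 • J0 G K)) (Jm G K) (-Jp G K) :=
  isSl2Triple_neg_two_nsmul (L := End ℂ (W G)) (smul_ne_zero two_ne_zero (J0_ne_zero G K))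
    (lie_J0_Jm G K) (lie_J0_Jp G K) (lie_Jm_Jp G K)

variable (G K : ℕ) (t : Fin (G + 1))

/-- The coefficient of `|γ,s-γ⟩ ⊗ |j,j+1+t-s⟩` in the lowest weight vector `ψ_(μ)`, `μ = t - γ`. -/
def psiCoeff (s : ℕ) : ℂ :=
  (-1) ^ s * ∏ r ∈ Finset.range s,
    Cp (jd K) (jd K + ((t.1 : ℕ) : ℂ) - r) / Cp (gam G) (r - gam G)

theorem psiLW_eq_sum :
    psiLW G K t = ∑ s ∈ Finset.range (t + 1), eV G s ((t : ℕ) - s) (psiCoeff G K t s) :=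
  rfl

theorem Cp_gam_ne_zero {G s : ℕ} (hs : s < G) : Cp (gam G) (s - gam G) ≠ 0 := by
  rw [Ne, Cp_eq_zero_iff, not_or]
  constructor
  · rw [show gam G - (s - gam G) = G - s by rw [gam]; ring]
    exact sub_ne_zero.2 (Nat.cast_injective.ne hs.ne')
  · rw [add_sub_cancel]
    exact s.cast_add_one_ne_zero

variable {G K t} in
theorem psiCoeff_succ_mul {s : ℕ} (hs : s < t) :
    psiCoeff G K t (s + 1) * Cp (gam G) (s - gam G) =
      -(psiCoeff G K t s * Cp (jd K) (jd K + (t : ℕ) - s)) := by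
  have hne : Cp (gam G) (s - gam G) ≠ 0 := Cp_gam_ne_zero (by omega)
  rw [psiCoeff, psiCoeff, Finset.prod_range_succ, pow_succ]
  field_simp

theorem psiLW_mem_VM : psiLW G K t ∈ VM G t :=
  Submodule.sum_mem _ fun _ _ => eV_mem_VM (add_sub_cancel _ _) _

theorem psiLW_ne_zero : psiLW G K t ≠ 0 := by
  have h1 : psiLW G K t (0, (t : ℕ)) = 1 := by
    rw [psiLW_eq_sum, Finsupp.finsetSum_apply, Finset.sum_eq_single 0]
    · simp [eV_apply, psiCoeff]
    · intro s _ hs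
      rw [eV_apply, if_neg (by simp [hs])]
    · simp
  intro h
  simp [h] at h1

theorem Jm_psiLW : Jm G K (psiLW G K t) = 0 := by
  -- The recursion for the coefficients makes the sum telescope to terms with out-of-range labels.
  let T (s : ℕ) : W G :=
    (psiCoeff G K t s * Cp (gam G) (s - 1 - gam G)) • eV G (s - 1) ((t : ℕ) - s) 1
  have hT : ∀ s ∈ Finset.range (t + 1),
      Jm G K (eV G s ((t : ℕ) - s) (psiCoeff G K t s)) = T s - T (s + 1) := by
    intro s hs
    rw [eV_eq_smul, map_smul, Jm_eV]
    simp only [T]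
    push_cast
    rw [← sub_sub, add_sub_cancel_right, add_sub_cancel_right]
    rcases (Finset.mem_range_succ_iff.1 hs).eq_or_lt with rfl | hlt
    · rw [eV_eq_zero (k := _ - 1) (by omega)]
      module
    · rw [psiCoeff_succ_mul hlt, ← add_sub_assoc]
      module
  rw [psiLW_eq_sum, map_sum, Finset.sum_congr rfl hT, Finset.sum_range_sub']
  simp only [T]
  rw [eV_eq_zero (by simp), eV_eq_zero (by push_cast; omega), smul_zero, smul_zero, sub_zero]

theorem hasPrimitiveVectorWith_psiLW :
    (isSl2Triple_J G K).HasPrimitiveVectorWith (psiLW G K t) (-2 * (jd K + muc G t + 1)) where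
  ne_zero := psiLW_ne_zero G K t
  lie_h := by
    rw [End.lie_apply, LinearMap.neg_apply, LinearMap.smul_apply,
      mem_VM_iff.1 (psiLW_mem_VM G K t), muc]
    module
  lie_e := Jm_psiLW G K t

/-- The `n`-th descendant of the lowest weight vector `ψ_(μ)`, `μ = t - γ`. The sign of `𝒥₊` is that
of the `sl₂` triple `isSl2Triple_J`. -/
def descendant (n : ℕ) : W G :=
  ((-Jp G K) ^ n : End ℂ (W G)) (psiLW G K t)

theorem descendant_mem_VM (n : ℕ) : descendant G K t n ∈ VM G (t + n) := by
  have h : -(2 • J0 G K (descendant G K t n)) =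
      (-2 * (jd K + muc G t + 1) - 2 * n) • descendant G K t n :=
    (hasPrimitiveVectorWith_psiLW G K t).lie_h_pow_toEnd_f n
  rw [mem_VM_iff (K := K)]
  linear_combination (norm := (simp only [muc]; push_cast; module)) (-1 / 2 : ℂ) • h

theorem Qcas_descendant (n : ℕ) :
    Qcas G K (descendant G K t n) = qe G K t • descendant G K t n := by
  have h := casimir_pow_toEnd_f (hasPrimitiveVectorWith_psiLW G K t) n
  have h4 : (-4 : ℂ) • Qcas G K (descendant G K t n) =
      (-2 * (jd K + muc G t + 1) * (-2 * (jd K + muc G t + 1) + 2)) • descendant G K t n :=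
    (neg_four_smul_Qcas G K _).trans h
  linear_combination (norm := (simp only [qe]; module)) (-1 / 4 : ℂ) • h4

variable {G K t} in
theorem descendant_ne_zero {n : ℕ} (h : ∀ i < n, K + 2 * t + i + 1 ≠ G) :
    descendant G K t n ≠ 0 := by
  refine pow_toEnd_f_ne_zero_of_forall_ne (hasPrimitiveVectorWith_psiLW G K t) fun i hi hμ => ?_
  refine h i hi (Nat.cast_injective (R := ℂ) ?_)
  rw [jd, muc, gam] at hμ
  push_cast
  linear_combination -hμ

variable {G K t} in
theorem qe_eq_qe_iff {t' : Fin (G + 1)} :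
    qe G K t = qe G K t' ↔ t = t' ∨ K + t + t' = G := by
  have hfactor : qe G K t - qe G K t' = ((t' : ℕ) - (t : ℕ)) * (K + (t : ℕ) + (t' : ℕ) - G) := by
    simp only [qe, muc, gam, jd]
    ring
  rw [← sub_eq_zero, hfactor, mul_eq_zero, sub_eq_zero, sub_eq_zero, eq_comm, Fin.ext_iff]
  norm_cast

end LowestWeightVectors

/-- The hypothesis says that `j > γ - 1` or `M ≤ 1/2`. -/
theorem Qcas_diagonalizable_on_VM_general (G K M' : ℕ) (h : G ≤ K ∨ K + 2 * M' ≤ G) :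
    DiagOn (Qcas G K) (VM G M') ∧
    (∀ c : ℂ,
      (∃ w ∈ VM G M', w ≠ 0 ∧ Qcas G K w = c • w) ↔
        ∃ t : Fin (G + 1), (t : ℕ) ≤ M' ∧ c = qe G K t) ∧
    (∀ t t' : Fin (G + 1), (t : ℕ) ≤ M' → (t' : ℕ) ≤ M' →
      qe G K t = qe G K t' → t = t') := by
  have hq : ∀ t t' : Fin (G + 1), (t : ℕ) ≤ M' → (t' : ℕ) ≤ M' →
      qe G K t = qe G K t' → t = t' := fun t t' ht ht' htt' =>
    (qe_eq_qe_iff.1 htt').elim id fun hsum => by omega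
  let v (t : MuIndex G M') : W G := descendant G K t (M' - t)
  have hv_eig (t : MuIndex G M') : End.HasEigenvector (Qcas G K) (qe G K t) (v t) :=
    ⟨End.mem_eigenspace_iff.2 (Qcas_descendant G K t _), descendant_ne_zero fun i hi => by omega⟩
  have hv_mem (t : MuIndex G M') : v t ∈ VM G M' := by
    simpa only [Nat.add_sub_cancel' t.2] using descendant_mem_VM G K t (M' - t)
  have hv_span : Submodule.span ℂ (Set.range v) = VM G M' :=
    span_range_eq_of_hasEigenvector (fun t t' htt' => Subtype.ext (hq t t' t.2 t'.2 htt'))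
      hv_eig hv_mem (finrank_VM_le G M')
  rw [← hv_span]
  refine ⟨diagOn_span_range fun t => (hv_eig t).apply_eq_smul, fun c => ?_, hq⟩
  rw [exists_mem_span_range_eigenvector_iff hv_eig, Subtype.exists]
  simp only [exists_prop]

/-- For j > γ-1 and every M = j+1-γ+M', the restriction of 𝒬 to V_M is
diagonalizable, its eigenvalues are exactly the values q_(μ) for μ = t-γ with t ≤ M'
(i.e. μ ≤ min(γ, M-j-1)), independent of M, and these are pairwise distinct. -/
theorem Qcas_diagonalizable_on_VM (G K : ℕ) (hG : 1 ≤ G)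
    (hj : ((K : ℝ) - 1) / 2 > (G : ℝ) / 2 - 1) (M' : ℕ) :
    DiagOn (Qcas G K) (VM G M') ∧
    (∀ c : ℂ,
      (∃ w ∈ VM G M', w ≠ 0 ∧ Qcas G K w = c • w) ↔
        ∃ t : Fin (G + 1), (t : ℕ) ≤ M' ∧ c = qe G K t) ∧
    (∀ t t' : Fin (G + 1), (t : ℕ) ≤ M' → (t' : ℕ) ≤ M' →
      qe G K t = qe G K t' → t = t') := by
  have hGK : (G : ℝ) < K + 1 := by linarith
  exact Qcas_diagonalizable_on_VM_general G K M' (.inl (Nat.lt_succ_iff.1 (mod_cast hGK)))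

end
end

section
/- Let γ ≥ 1/2 be a half-integer, ε ∈ {0, 1/2}, and let j be a real number with 2j ∈ ℤ and j − ε ∉ ℤ. Then for every M ∈ ε + γ + ℤ, the characteristic polynomial of the restriction Q_M of the Casimir 𝒬 of F_γ ⊗ C^ε_j to V_M equals Π_{μ=−γ}^{γ} (X − q_(μ)), where q_(μ) = −(j+μ)(j+μ+1); i.e. the eigenvalues of Q_M, with algebraic multiplicity, are exactly the values q_(μ), μ ∈ {−γ, …, γ}. -/
/-!
Couplings F_γ ⊗ C^ε_j for sl(2,ℝ).

Conventions: γ = G/2 with `G : ℕ`, `1 ≤ G`; ε is encoded by `E : ℂ` (with `E = 0 ∨ E = 1/2`);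
j ∈ ℂ. The space F_γ ⊗ C^ε_j has basis indexed by `(ν, z) : Fin (G+1) × ℤ`, the basis vector
`single (ν,z) 1` representing |γ, ν-γ⟩ ⊗ |j, ε+z⟩.
-/

noncomputable section

/-- m = ε + z for z : ℤ. -/
def mcont (E : ℂ) (z : ℤ) : ℂ := E + (z : ℂ)

/-- The vector space F_γ ⊗ C^ε_j. -/
abbrev Wc (G : ℕ) := (Fin (G + 1) × ℤ) →₀ ℂ

/-- Basis vector with coefficient, out-of-range F_γ indices giving 0. -/
def eVc (G : ℕ) (i : ℤ) (z : ℤ) (c : ℂ) : Wc G :=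
  if h : 0 ≤ i ∧ i < (G : ℤ) + 1 then
    Finsupp.single ((⟨i.toNat, by omega⟩ : Fin (G + 1)), z) c
  else 0

/-- 𝒥₀ = J₀ ⊗ 1 + 1 ⊗ J₀. -/
def J0c (G : ℕ) (E : ℂ) : Wc G →ₗ[ℂ] Wc G :=
  Finsupp.lsum ℂ fun p => LinearMap.toSpanSingleton ℂ (Wc G)
    (Finsupp.single p (muc G p.1 + mcont E p.2))

/-- 𝒥₊ = J₊ ⊗ 1 + 1 ⊗ J₊. -/
def Jpc (G : ℕ) (j E : ℂ) : Wc G →ₗ[ℂ] Wc G :=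
  Finsupp.lsum ℂ fun p => LinearMap.toSpanSingleton ℂ (Wc G)
    (eVc G ((p.1 : ℕ) + 1) p.2 (Cp (gam G) (muc G p.1)) +
      Finsupp.single (p.1, p.2 + 1) (Cp j (mcont E p.2)))

/-- 𝒥₋ = J₋ ⊗ 1 + 1 ⊗ J₋. -/
def Jmc (G : ℕ) (j E : ℂ) : Wc G →ₗ[ℂ] Wc G :=
  Finsupp.lsum ℂ fun p => LinearMap.toSpanSingleton ℂ (Wc G)
    (eVc G ((p.1 : ℕ) - 1) p.2 (Cm (gam G) (muc G p.1)) +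
      Finsupp.single (p.1, p.2 - 1) (Cm j (mcont E p.2)))

/-- The Casimir 𝒬 = -𝒥₀(𝒥₀+1) + 𝒥₋𝒥₊. -/
def Qc (G : ℕ) (j E : ℂ) : Wc G →ₗ[ℂ] Wc G :=
  -(J0c G E ∘ₗ (J0c G E + LinearMap.id)) + Jmc G j E ∘ₗ Jpc G j E

/-- The 𝒥₀-eigenvalue-M subspace V_M of F_γ ⊗ C^ε_j for M = ε + γ + M₀, M₀ : ℤ:
spanned by the |γ,ν-γ⟩⊗|j,ε+z⟩ with (ν-γ) + (ε+z) = M, i.e. z = G + M₀ - ν. -/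
def VMc (G : ℕ) (M₀ : ℤ) : Submodule ℂ (Wc G) :=
  Submodule.span ℂ
    {w : Wc G | ∃ ν : Fin (G + 1), w = Finsupp.single (ν, (G : ℤ) + M₀ - (ν : ℕ)) 1}

/-- q_(μ) = -(j+μ)(j+μ+1) with μ = t - γ. -/
def qc (G : ℕ) (j : ℂ) (t : Fin (G + 1)) : ℂ :=
  -((j + muc G t) * (j + muc G t + 1))

/-- The matrix of the restriction of 𝒬 to V_M (M = ε + γ + M₀) in the basis
|γ,ν-γ⟩⊗|j, M - (ν-γ)⟩, ν ∈ Fin (G+1): entry (ν,ν') is the coefficient of the ν-th basis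
vector in the image of the ν'-th one. -/
def QMmat (G : ℕ) (j E : ℂ) (M₀ : ℤ) : Matrix (Fin (G + 1)) (Fin (G + 1)) ℂ :=
  fun ν ν' =>
    (Qc G j E (Finsupp.single (ν', (G : ℤ) + M₀ - (ν' : ℕ)) 1))
      (ν, (G : ℤ) + M₀ - (ν : ℕ))

/-!
The square roots in `C₊` and `C₋` pair up in the products `C₊(j,m) C₋(j,m+1) = -(j-m)(j+m+1)`. On
`V_M` the Casimir is a tridiagonal matrix whose diagonal entries and products of opposite
off-diagonal entries are built from such products, hence polynomial in `j`, `γ` and `M`. As the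
determinant of a tridiagonal matrix depends on these quantities only, the characteristic polynomial
is that of `q₀ - L`, with `q₀ = -(j-γ)(j-γ+1)` and `L` the Hahn difference operator
  `(L f)(x) = B(x) (f(x+1) - f(x)) - D(x) (f(x) - f(x-1))`,  `x = 0, …, N`,
where `N = 2γ`, `B(x) = (x+α+1)(x-N)`, `D(x) = x(x-β-N-1)`, `α = j-M-γ` and `β = j+M-γ`.

In the basis of binomial functions `x ↦ choose x k` the operator `L` is upper bidiagonal, with
diagonal entries `k(k+α+β+1)`. The eigenvalues of the Casimir are therefore
`q₀ - k(k+2(j-γ)+1) = -(j+μ)(j+μ+1)` with `μ = k-γ`.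
-/

section Tridiagonal

open Polynomial

variable {R : Type*}

/-- The tridiagonal `n × n` matrix with entry `a x` at `(x, x)`, `b x` at `(x, x + 1)` and `c x` at
`(x + 1, x)`. The coefficients are indexed by all of `ℕ`, so that deleting the first row and column
amounts to shifting them. -/
def tridiagonal [AddMonoid R] (n : ℕ) (a b c : ℕ → R) : Matrix (Fin n) (Fin n) R :=
  Matrix.of fun x y => (if (y : ℕ) = x then a x else 0) + (if (y : ℕ) = x + 1 then b x else 0) +
    (if (y : ℕ) + 1 = x then c y else 0)

theorem tridiagonal_apply [AddMonoid R] (n : ℕ) (a b c : ℕ → R) (x y : Fin n) :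
    tridiagonal n a b c x y = (if (y : ℕ) = x then a x else 0) +
      (if (y : ℕ) = x + 1 then b x else 0) + (if (y : ℕ) + 1 = x then c y else 0) :=
  rfl

theorem tridiagonal_transpose [AddCommMonoid R] (n : ℕ) (a b c : ℕ → R) :
    (tridiagonal n a b c).transpose = tridiagonal n a c b := by
  ext x y
  rw [Matrix.transpose_apply, tridiagonal_apply, tridiagonal_apply, add_right_comm]
  congr 2
  · split_ifs <;> simp_all
  · simp only [eq_comm]
  · simp only [eq_comm]

theorem tridiagonal_map {S F : Type*} [AddMonoid R] [AddMonoid S] [FunLike F R S]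
    [AddMonoidHomClass F R S] (n : ℕ) (a b c : ℕ → R) (f : F) :
    (tridiagonal n a b c).map f = tridiagonal n (f ∘ a) (f ∘ b) (f ∘ c) := by
  ext x y
  simp [tridiagonal_apply, apply_ite f]

theorem scalar_sub_tridiagonal [Ring R] (n : ℕ) (t : R) (a b c : ℕ → R) :
    Matrix.scalar (Fin n) t - tridiagonal n a b c =
      tridiagonal n (fun x => t - a x) (-b) (-c) := by
  ext x y
  rw [Matrix.sub_apply, Matrix.scalar_apply, Matrix.diagonal_apply, tridiagonal_apply,
    tridiagonal_apply]
  simp only [Fin.ext_iff, eq_comm (a := (x : ℕ)) (b := y), Pi.neg_apply]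
  split_ifs <;> first | omega | simp

theorem sum_tridiagonal_mul [NonUnitalNonAssocSemiring R] (n : ℕ) (a b c f : ℕ → R)
    (x : Fin n) :
    ∑ y, tridiagonal n a b c x y * f y =
      a x * f x + (if (x : ℕ) + 1 < n then b x * f (x + 1) else 0) +
        (if (x : ℕ) = 0 then 0 else c (x - 1) * f (x - 1)) := by
  simp only [tridiagonal_apply]
  rw [Fin.sum_univ_eq_sum_range (fun y => ((if y = (x : ℕ) then a x else 0) +
    (if y = x + 1 then b x else 0) + (if y + 1 = x then c y else 0)) * f y)]
  simp only [add_mul, Finset.sum_add_distrib, ite_mul, zero_mul]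
  obtain ⟨x, hx⟩ := x
  congr 1
  · simp [hx]
  · rcases x with _ | x
    · simp
    · simp [Nat.lt_of_succ_lt hx]

variable [CommRing R]

theorem det_tridiagonal_add_two (n : ℕ) (a b c : ℕ → R) :
    (tridiagonal (n + 2) a b c).det =
      a 0 * (tridiagonal (n + 1) (fun x => a (x + 1)) (fun x => b (x + 1))
        (fun x => c (x + 1))).det -
      b 0 * c 0 * (tridiagonal n (fun x => a (x + 2)) (fun x => b (x + 2))
        (fun x => c (x + 2))).det := by
  set A := tridiagonal (n + 2) a b c
  have entry_zero_zero : A 0 0 = a 0 := by simp [A, tridiagonal_apply]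
  have entry_zero_one : A 0 1 = b 0 := by simp [A, tridiagonal_apply]
  have entry_zero_add_two (y : Fin n) : A 0 y.succ.succ = 0 := by simp [A, tridiagonal_apply]
  have minor_zero : A.submatrix Fin.succ (Fin.succAbove 0) =
      tridiagonal (n + 1) (fun x => a (x + 1)) (fun x => b (x + 1)) (fun x => c (x + 1)) := by
    ext x y
    simp [A, tridiagonal_apply]
  have minor_one : (A.submatrix Fin.succ (Fin.succAbove 1)).det =
      c 0 * (tridiagonal n (fun x => a (x + 2)) (fun x => b (x + 2))
        (fun x => c (x + 2))).det := by
    have minor : (A.submatrix Fin.succ (Fin.succAbove 1)).submatrix (Fin.succAbove 0) Fin.succ =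
        tridiagonal n (fun x => a (x + 2)) (fun x => b (x + 2)) (fun x => c (x + 2)) := by
      ext x y
      simp [A, tridiagonal_apply, Fin.one_succAbove_succ]
    rw [Matrix.det_succ_column_zero, Fin.sum_univ_succ, minor]
    simp [A, tridiagonal_apply]
  rw [Matrix.det_succ_row_zero, Fin.sum_univ_succ, Fin.sum_univ_succ, minor_zero,
    Fin.succ_zero_eq_one, minor_one, entry_zero_zero, entry_zero_one]
  simp only [entry_zero_add_two, Fin.val_zero, Fin.val_one, mul_zero, zero_mul,
    Finset.sum_const_zero]
  ring

theorem det_tridiagonal_congr (n : ℕ) (a : ℕ → R) {b c b' c' : ℕ → R} (h : b * c = b' * c') :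
    (tridiagonal n a b c).det = (tridiagonal n a b' c').det := by
  have h_apply (x : ℕ) : b x * c x = b' x * c' x := congrFun h x
  induction n using Nat.twoStepInduction generalizing a b c b' c' with
  | zero => simp
  | one => simp [tridiagonal_apply]
  | more n ih ih' =>
    rw [det_tridiagonal_add_two, det_tridiagonal_add_two, h_apply 0,
      ih _ (funext fun x => h_apply (x + 2)) fun x => h_apply (x + 2),
      ih' _ (funext fun x => h_apply (x + 1)) fun x => h_apply (x + 1)]

theorem charmatrix_tridiagonal (n : ℕ) (a b c : ℕ → R) :
    (tridiagonal n a b c).charmatrix =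
      tridiagonal n (fun x => X - C (a x)) (-(C ∘ b)) (-(C ∘ c)) := by
  rw [Matrix.charmatrix, RingHom.mapMatrix_apply, tridiagonal_map, scalar_sub_tridiagonal]
  rfl

theorem charpoly_tridiagonal_congr (n : ℕ) (a : ℕ → R) {b c b' c' : ℕ → R}
    (h : b * c = b' * c') :
    (tridiagonal n a b c).charpoly = (tridiagonal n a b' c').charpoly := by
  rw [Matrix.charpoly, Matrix.charpoly, charmatrix_tridiagonal, charmatrix_tridiagonal]
  refine det_tridiagonal_congr n _ (funext fun x => ?_)
  simpa using congrArg C (congrFun h x)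

theorem charpoly_tridiagonal_lower_zero (n : ℕ) (a b : ℕ → R) :
    (tridiagonal n a b 0).charpoly = ∏ x : Fin n, (X - C (a x)) := by
  rw [Matrix.charpoly_of_isUpperTriangular]
  · simp [tridiagonal_apply]
  · intro x y (hyx : y < x)
    simp [tridiagonal_apply, show (y : ℕ) ≠ x by omega, show (y : ℕ) ≠ x + 1 by omega]

theorem charpoly_eq_of_semiconjBy {n : Type*} [Fintype n] [DecidableEq n] {P A B : Matrix n n R}
    (hP : IsUnit P) (h : SemiconjBy P A B) : A.charpoly = B.charpoly := by
  obtain ⟨P, rfl⟩ := hP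
  rw [← Matrix.charpoly_units_conj P A, ← Matrix.coe_units_inv, h.eq, Units.mul_inv_cancel_right]

end Tridiagonal

section Hahn

open Polynomial

variable {R : Type*} [CommRing R]

/-- The coefficient `B` of the forward difference in the Hahn difference operator. -/
def hahnB (N : ℕ) (α : R) (x : ℕ) : R := (x + α + 1) * (x - N)

/-- The coefficient `D` of the backward difference in the Hahn difference operator. -/
def hahnD (N : ℕ) (β : R) (x : ℕ) : R := x * (x - β - N - 1)

/-- The eigenvalue `k(k+α+β+1)` of the Hahn difference operator. -/
def hahnEigenvalue (α β : R) (k : ℕ) : R := k * (k + α + β + 1)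

/-- The matrix of the Hahn difference operator
`f ↦ B(x) (f(x+1) - f(x)) - D(x) (f(x) - f(x-1))` on functions on `{0, …, N}`; the values
`f(-1)` and `f(N+1)` do not matter since `D(0) = 0` and `B(N) = 0`. -/
def hahnMatrix (N : ℕ) (α β : R) : Matrix (Fin (N + 1)) (Fin (N + 1)) R :=
  tridiagonal (N + 1) (fun x => -(hahnB N α x + hahnD N β x)) (hahnB N α)
    (fun x => hahnD N β (x + 1))

/-- Pascal's matrix, whose columns are the binomial functions `x ↦ choose x k`. -/
def pascalMatrix (R : Type*) [CommRing R] (n : ℕ) : Matrix (Fin n) (Fin n) R :=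
  Matrix.of fun x k => ((x : ℕ).choose k : R)

theorem isUnit_pascalMatrix (n : ℕ) : IsUnit (pascalMatrix R n) := by
  have lower : (pascalMatrix R n).IsLowerTriangular := fun x k (hxk : x < k) => by
    simp [pascalMatrix, Nat.choose_eq_zero_of_lt hxk]
  rw [Matrix.isUnit_iff_isUnit_det, Matrix.det_of_isLowerTriangular _ lower]
  simp [pascalMatrix]

/-- At `x = 0` the truncated `x - 1` is harmless since `hahnD` vanishes there. -/
theorem hahn_difference_choose (N : ℕ) (α β : R) (x k : ℕ) :
    hahnB N α x * ((x + 1).choose k - x.choose k) - hahnD N β x * (x.choose k - (x - 1).choose k) =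
      hahnEigenvalue α β k * x.choose k +
        (if k = 0 then 0 else hahnB N α (k - 1) * x.choose (k - 1)) := by
  rcases k with _ | k
  · simp [hahnEigenvalue]
  rcases x with _ | x
  · rcases k with _ | k
    · simp [hahnB, hahnD]
    · simp [hahnB, hahnD, Nat.choose_eq_zero_of_lt (show 1 < k + 1 + 1 by omega)]
  have pascal_top :
      ((x + 1 + 1).choose (k + 1) : R) = (x + 1).choose k + (x + 1).choose (k + 1) := by
    rw [Nat.choose_succ_succ', Nat.cast_add]
  have pascal : ((x + 1).choose (k + 1) : R) = x.choose k + x.choose (k + 1) := by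
    rw [Nat.choose_succ_succ', Nat.cast_add]
  have absorb : ((x : R) + 1) * x.choose k = (x + 1).choose (k + 1) * (k + 1) :=
    mod_cast congrArg (Nat.cast (R := R)) (Nat.add_one_mul_choose_eq x k)
  have absorb_top :
      ((x : R) + 1 + 1) * (x + 1).choose k = (x + 1 + 1).choose (k + 1) * (k + 1) :=
    mod_cast congrArg (Nat.cast (R := R)) (Nat.add_one_mul_choose_eq (x + 1) k)
  rw [pascal_top] at absorb_top ⊢
  simp only [hahnB, hahnD, hahnEigenvalue, Nat.add_sub_cancel, if_neg (Nat.succ_ne_zero k)]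
  push_cast
  linear_combination (x + k + 2 + α - N) * absorb_top - (x - β - N) * absorb
    - ((x : R) + 1) * (x - β - N) * pascal

theorem hahnMatrix_mul_pascalMatrix_apply (N : ℕ) (α β : R) (x k : Fin (N + 1)) :
    (hahnMatrix N α β * pascalMatrix R (N + 1)) x k =
      hahnB N α x * (((x : ℕ) + 1).choose k - (x : ℕ).choose k) -
        hahnD N β x * ((x : ℕ).choose k - ((x : ℕ) - 1).choose k) := by
  have upper : (if (x : ℕ) + 1 < N + 1 then hahnB N α x * (((x : ℕ) + 1).choose k : R) else 0) =
      hahnB N α x * ((x : ℕ) + 1).choose k := by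
    split_ifs with h
    · rfl
    · simp [hahnB, show (x : ℕ) = N by omega]
  have lower : (if (x : ℕ) = 0 then 0
      else hahnD N β ((x : ℕ) - 1 + 1) * (((x : ℕ) - 1).choose k : R)) =
      hahnD N β x * ((x : ℕ) - 1).choose k := by
    split_ifs with h
    · simp [hahnD, h]
    · rw [Nat.sub_add_cancel (by omega)]
  calc (hahnMatrix N α β * pascalMatrix R (N + 1)) x k
      = ∑ y, hahnMatrix N α β x y * ((y : ℕ).choose k : R) := rfl
    _ = _ := by
      rw [hahnMatrix, sum_tridiagonal_mul _ _ _ _ (fun y => (y.choose k : R)), upper, lower]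
      ring

theorem semiconjBy_pascalMatrix_hahnMatrix (N : ℕ) (α β : R) :
    SemiconjBy (pascalMatrix R (N + 1))
      (tridiagonal (N + 1) (hahnEigenvalue α β) (hahnB N α) 0) (hahnMatrix N α β) := by
  ext x k
  rw [hahnMatrix_mul_pascalMatrix_apply, hahn_difference_choose]
  calc (pascalMatrix R (N + 1) * tridiagonal (N + 1) (hahnEigenvalue α β) (hahnB N α) 0) x k
      = ∑ l, tridiagonal (N + 1) (hahnEigenvalue α β) 0 (hahnB N α) k l *
          ((x : ℕ).choose l : R) := by
        simp only [← tridiagonal_transpose _ _ (hahnB N α), Matrix.transpose_apply,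
          Matrix.mul_apply, pascalMatrix, Matrix.of_apply, mul_comm]
    _ = _ := by
        rw [sum_tridiagonal_mul _ _ _ _ (fun l => ((x : ℕ).choose l : R))]
        simp

theorem charpoly_scalar_sub_hahnMatrix (N : ℕ) (α β q : R) :
    (Matrix.scalar (Fin (N + 1)) q - hahnMatrix N α β).charpoly =
      ∏ k : Fin (N + 1), (X - C (q - hahnEigenvalue α β k)) := by
  have scalar_commute : SemiconjBy (pascalMatrix R (N + 1)) (Matrix.scalar (Fin (N + 1)) q)
      (Matrix.scalar (Fin (N + 1)) q) :=
    (Matrix.scalar_commute q (Commute.all q) _).symm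
  rw [← charpoly_eq_of_semiconjBy (isUnit_pascalMatrix _)
    (scalar_commute.sub_right (semiconjBy_pascalMatrix_hahnMatrix N α β)),
    scalar_sub_tridiagonal, neg_zero, charpoly_tridiagonal_lower_zero]

end Hahn

section Casimir

theorem csqrt_mul_self (z : ℂ) : csqrt z * csqrt z = z := by
  rw [csqrt, ← sq, one_div]
  exact_mod_cast Complex.cpow_nat_inv_pow z two_ne_zero

theorem Cp_mul_Cm (j m : ℂ) : Cp j m * Cm j (m + 1) = -((j - m) * (j + m + 1)) := by
  calc Cp j m * Cm j (m + 1)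
      = Complex.I ^ 2 * (csqrt (j - m) * csqrt (j - m)) *
          (csqrt (j + m + 1) * csqrt (j + m + 1)) := by
        rw [Cp, Cm, show j - (m + 1) + 1 = j - m by ring, ← add_assoc]
        ring
    _ = -((j - m) * (j + m + 1)) := by
        rw [csqrt_mul_self, csqrt_mul_self, Complex.I_sq]
        ring

theorem Cp_neg_sub_one (j : ℂ) : Cp j (-j - 1) = 0 := by
  rw [Cp, show j + (-j - 1) + 1 = 0 by ring]
  simp [csqrt]

theorem Cm_add_one (j : ℂ) : Cm j (j + 1) = 0 := by
  simp [Cm, csqrt]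

theorem eVc_natCast (G : ℕ) (ν : Fin (G + 1)) (z : ℤ) (c : ℂ) :
    eVc G (ν : ℕ) z c = Finsupp.single (ν, z) c := by
  simp [eVc, show ((ν : ℕ) : ℤ) < G + 1 by omega]

theorem eVc_eq_zero (G : ℕ) {i : ℤ} (z : ℤ) {c : ℂ} (h : 0 ≤ i → i < G + 1 → c = 0) :
    eVc G i z c = 0 := by
  unfold eVc
  split_ifs with hi
  · simp [h hi.1 hi.2]
  · rfl

theorem eVc_apply (G : ℕ) (i z : ℤ) (c : ℂ) (ν : Fin (G + 1)) (w : ℤ) :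
    eVc G i z c (ν, w) = if i = (ν : ℕ) ∧ z = w then c else 0 := by
  by_cases hi : 0 ≤ i ∧ i < G + 1
  · lift i to ℕ using hi.1
    rw [eVc_natCast G ⟨i, by omega⟩, Finsupp.single_apply]
    simp [Fin.ext_iff]
  · rw [eVc_eq_zero G z (by omega), Finsupp.zero_apply, if_neg (by omega)]

theorem smul_eVc (G : ℕ) (i z : ℤ) (c d : ℂ) : c • eVc G i z d = eVc G i z (c * d) := by
  unfold eVc
  split_ifs <;> simp

theorem J0c_eVc (G : ℕ) (E : ℂ) (i z : ℤ) (c : ℂ) :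
    J0c G E (eVc G i z c) = eVc G i z (c * (i - gam G + mcont E z)) := by
  by_cases hi : 0 ≤ i ∧ i < G + 1
  · lift i to ℕ using hi.1
    rw [eVc_natCast G ⟨i, by omega⟩, eVc_natCast G ⟨i, by omega⟩]
    rw [J0c, Finsupp.lsum_single, LinearMap.toSpanSingleton_apply, Finsupp.smul_single,
      smul_eq_mul, muc, Int.cast_natCast]
  · rw [eVc_eq_zero G z (by omega), eVc_eq_zero G z (by omega), map_zero]

/-- At `i = -1` the left-hand side is `0` although `i + 1` is in range: there `C₊(γ,-γ-1) = 0`. -/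
theorem Jpc_eVc (G : ℕ) (j E : ℂ) (i z : ℤ) (c : ℂ) :
    Jpc G j E (eVc G i z c) = eVc G (i + 1) z (c * Cp (gam G) (i - gam G)) +
      eVc G i (z + 1) (c * Cp j (mcont E z)) := by
  by_cases hi : 0 ≤ i ∧ i < G + 1
  · lift i to ℕ using hi.1
    rw [eVc_natCast G ⟨i, by omega⟩, eVc_natCast G ⟨i, by omega⟩]
    simp [Jpc, muc, smul_eVc]
  · rw [eVc_eq_zero G z (by omega), eVc_eq_zero G (i := i) (z + 1) (by omega), map_zero,
      eVc_eq_zero, add_zero]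
    intro h _
    rw [show i = -1 by omega, Int.cast_neg, Int.cast_one, neg_sub_comm, Cp_neg_sub_one, mul_zero]

theorem Jmc_eVc (G : ℕ) (j E : ℂ) (i z : ℤ) (c : ℂ) :
    Jmc G j E (eVc G i z c) = eVc G (i - 1) z (c * Cm (gam G) (i - gam G)) +
      eVc G i (z - 1) (c * Cm j (mcont E z)) := by
  by_cases hi : 0 ≤ i ∧ i < G + 1
  · lift i to ℕ using hi.1
    rw [eVc_natCast G ⟨i, by omega⟩, eVc_natCast G ⟨i, by omega⟩]
    simp [Jmc, muc, smul_eVc]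
  · rw [eVc_eq_zero G z (by omega), eVc_eq_zero G (i := i) (z - 1) (by omega), map_zero,
      eVc_eq_zero, add_zero]
    intro _ h
    have top : ((G + 1 : ℤ) : ℂ) - gam G = gam G + 1 := by
      push_cast
      rw [gam]
      ring
    rw [show i = G + 1 by omega, top, Cm_add_one, mul_zero]

/-- The coefficient of `|γ,μ⟩ ⊗ |j,M-μ⟩` in its image under the Casimir. -/
def casimirDiag (γ j M μ : ℂ) : ℂ :=
  -(M * (M + 1)) - (γ - μ) * (γ + μ + 1) - (j - (M - μ)) * (j + (M - μ) + 1)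

/-- The coefficient of `|γ,μ⟩ ⊗ |j,M-μ⟩` in the image of `|γ,μ+1⟩ ⊗ |j,M-μ-1⟩` under the Casimir. -/
def casimirUpper (γ j M μ : ℂ) : ℂ := Cp j (M - (μ + 1)) * Cm γ (μ + 1)

/-- The coefficient of `|γ,μ+1⟩ ⊗ |j,M-μ-1⟩` in the image of `|γ,μ⟩ ⊗ |j,M-μ⟩` under the Casimir. -/
def casimirLower (γ j M μ : ℂ) : ℂ := Cp γ μ * Cm j (M - μ)

theorem casimirUpper_mul_casimirLower (γ j M μ : ℂ) :
    casimirUpper γ j M μ * casimirLower γ j M μ =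
      (γ - μ) * (γ + μ + 1) * ((j - (M - μ) + 1) * (j + (M - μ))) := by
  have pair_j := Cp_mul_Cm j (M - (μ + 1))
  rw [show M - (μ + 1) + 1 = M - μ by ring] at pair_j
  calc casimirUpper γ j M μ * casimirLower γ j M μ
      = (Cp γ μ * Cm γ (μ + 1)) * (Cp j (M - (μ + 1)) * Cm j (M - μ)) := by
        rw [casimirUpper, casimirLower]
        ring
    _ = _ := by
        rw [Cp_mul_Cm, pair_j]
        ring

theorem Qc_eVc (G : ℕ) (j E : ℂ) (i z : ℤ) {M μ : ℂ} (hμ : μ = i - gam G)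
    (hM : M = μ + mcont E z) :
    Qc G j E (eVc G i z 1) = eVc G i z (casimirDiag (gam G) j M μ) +
      eVc G (i - 1) (z + 1) (casimirUpper (gam G) j M (μ - 1)) +
      eVc G (i + 1) (z - 1) (casimirLower (gam G) j M μ) := by
  have weight_raise : ((i + 1 : ℤ) : ℂ) - gam G = μ + 1 := by
    rw [hμ]
    push_cast
    ring
  have weight_right : mcont E z = M - μ := by rw [hM, add_sub_cancel_left]
  have weight_right_raise : mcont E (z + 1) = M - μ + 1 := by
    rw [← weight_right, mcont, mcont]
    push_cast
    ring
  have upper : casimirUpper (gam G) j M (μ - 1) = Cp j (M - μ) * Cm (gam G) μ := by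
    rw [casimirUpper, sub_add_cancel]
  have diag : casimirDiag (gam G) j M μ = -(M * (M + 1)) + Cp (gam G) μ * Cm (gam G) (μ + 1) +
      Cp j (M - μ) * Cm j (M - μ + 1) := by
    rw [casimirDiag, Cp_mul_Cm, Cp_mul_Cm]
    ring
  ext ⟨ν, w⟩
  simp only [Qc, LinearMap.add_apply, LinearMap.neg_apply, LinearMap.comp_apply,
    LinearMap.id_apply, map_add, J0c_eVc, Jpc_eVc, Jmc_eVc, Finsupp.add_apply,
    Finsupp.neg_apply, eVc_apply, add_sub_cancel_right, one_mul, weight_raise, weight_right,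
    weight_right_raise, ← hμ, upper, diag, casimirLower]
  split_ifs <;> ring

theorem QMmat_eq_tridiagonal (G : ℕ) (j E : ℂ) (M₀ : ℤ) :
    QMmat G j E M₀ = tridiagonal (G + 1)
      (fun x => casimirDiag (gam G) j (E + gam G + M₀) (x - gam G))
      (fun x => casimirUpper (gam G) j (E + gam G + M₀) (x - gam G))
      (fun x => casimirLower (gam G) j (E + gam G + M₀) (x - gam G)) := by
  ext x y
  have weight : E + gam G + M₀ = ((y : ℕ) : ℤ) - gam G + mcont E (G + M₀ - (y : ℕ)) := by
    rw [mcont, gam]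
    push_cast
    ring
  rw [QMmat, ← eVc_natCast, Qc_eVc G j E _ _ rfl weight, tridiagonal_apply]
  simp only [Finsupp.add_apply, eVc_apply]
  refine congrArg₂ _ (congrArg₂ _ ?_ ?_) ?_
  · refine ite_congr (propext (by omega)) (fun h => ?_) fun _ => rfl
    rw [h, Int.cast_natCast]
  · refine ite_congr (propext (by omega)) (fun h => ?_) fun _ => rfl
    rw [h]
    push_cast
    ring_nf
  · exact ite_congr (propext (by omega)) (fun _ => by rw [Int.cast_natCast]) fun _ => rfl

theorem casimirDiag_eq_hahn (G : ℕ) (j M : ℂ) (x : ℕ) :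
    casimirDiag (gam G) j M (x - gam G) = -((j - gam G) * (j - gam G + 1)) -
      -(hahnB G (j - M - gam G) x + hahnD G (j + M - gam G) x) := by
  simp only [casimirDiag, hahnB, hahnD, gam]
  ring

theorem casimirUpper_mul_casimirLower_eq_hahn (G : ℕ) (j M : ℂ) (x : ℕ) :
    casimirUpper (gam G) j M (x - gam G) * casimirLower (gam G) j M (x - gam G) =
      -hahnB G (j - M - gam G) x * -hahnD G (j + M - gam G) (x + 1) := by
  rw [casimirUpper_mul_casimirLower]
  simp only [hahnB, hahnD, gam]
  push_cast
  ring

theorem qc_eq_sub_hahnEigenvalue (G : ℕ) (j M : ℂ) (t : Fin (G + 1)) :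
    qc G j t = -((j - gam G) * (j - gam G + 1)) -
      hahnEigenvalue (j - M - gam G) (j + M - gam G) t := by
  simp only [qc, muc, hahnEigenvalue]
  ring

theorem charpoly_QM_general (G : ℕ) (j E : ℂ) (M₀ : ℤ) :
    (QMmat G j E M₀).charpoly =
      ∏ t : Fin (G + 1), (Polynomial.X - Polynomial.C (qc G j t)) := by
  set M : ℂ := E + gam G + M₀ with hM
  set q₀ : ℂ := -((j - gam G) * (j - gam G + 1)) with hq₀
  calc (QMmat G j E M₀).charpoly
      = (Matrix.scalar (Fin (G + 1)) q₀ -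
          hahnMatrix G (j - M - gam G) (j + M - gam G)).charpoly := by
        rw [QMmat_eq_tridiagonal, hahnMatrix, scalar_sub_tridiagonal, hq₀, ← hM,
          ← funext (casimirDiag_eq_hahn G j M)]
        exact charpoly_tridiagonal_congr _ _
          (funext (casimirUpper_mul_casimirLower_eq_hahn G j M))
    _ = ∏ t : Fin (G + 1), (Polynomial.X - Polynomial.C (qc G j t)) := by
        simp only [charpoly_scalar_sub_hahnMatrix, qc_eq_sub_hahnEigenvalue G j M, hq₀]

end Casimir

/-- For real j with 2j ∈ ℤ and j - ε ∉ ℤ, the characteristic polynomial of the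
restriction of 𝒬 to any V_M is Π_{μ=-γ}^{γ} (X - q_(μ)). -/
theorem charpoly_QM (G : ℕ) (hG : 1 ≤ G) (Er jr : ℝ) (hE : Er = 0 ∨ Er = 1 / 2)
    (hjZ : ∃ n : ℤ, 2 * jr = (n : ℝ)) (hje : ¬ ∃ n : ℤ, jr - Er = (n : ℝ)) :
    ∀ M₀ : ℤ,
      (QMmat G (jr : ℂ) (Er : ℂ) M₀).charpoly =
        ∏ t : Fin (G + 1), (Polynomial.X - Polynomial.C (qc G (jr : ℂ) t)) :=
  fun M₀ => charpoly_QM_general G jr Er M₀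

end
end
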